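/- arXiv:2108.01024 — 2 statements merged into one kernel-verified Lean document; each statement's English description precedes it below -/
import Mathlib

section
/- For every integer n ≥ 1 there exist polynomials p(q) and p_s(q) with integer coefficients, one polynomial p_s for each isomorphism class s of superfigurations on at most n points, such that for every finite projective plane Π of order q, the number of ordered n-arcs in Π satisfies C_n(Π) = p(q) + Σ_s p_s(q) · A_s(Π), where the sum runs over all isomorphism classes s of superfigurations on at most n points. -/
/-- A linear space, encoded by its point set `P` (a finite set of natural numbers) and its
set `L` of lines: every line is a subset of `P` with at least 2 points, and any two
distinct points lie on exactly one line. -/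
def IsLinearSpace (P : Finset ℕ) (L : Finset (Finset ℕ)) : Prop :=
  (∀ l ∈ L, l ⊆ P ∧ 2 ≤ l.card) ∧
    ∀ a ∈ P, ∀ b ∈ P, a ≠ b → ∃! l, l ∈ L ∧ a ∈ l ∧ b ∈ l

/-- A superfiguration: a linear space in which every point lies on at least 3 full lines
(lines containing at least 3 points). -/
def IsSuperfiguration (P : Finset ℕ) (L : Finset (Finset ℕ)) : Prop :=
  IsLinearSpace P L ∧ ∀ p ∈ P, 3 ≤ (L.filter fun l => p ∈ l ∧ 3 ≤ l.card).card

/-- Two linear spaces (given as pairs of a point set and a line set) are isomorphic if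
there is a bijection of their point sets carrying the lines of one exactly to the lines of
the other. -/
def LSIso (s t : Finset ℕ × Finset (Finset ℕ)) : Prop :=
  ∃ e : ℕ → ℕ, Set.BijOn e ↑s.1 ↑t.1 ∧ t.2 = s.2.image (Finset.image e)

/-- An ordered `n`-arc in a projective plane with point type `Pt` and line type `Ln`:
an injective map `Fin n → Pt` no 3 of whose points are collinear. -/
def IsPlaneArc {Pt : Type} (Ln : Type) [Membership Pt Ln] {n : ℕ} (τ : Fin n → Pt) : Prop :=
  Function.Injective τ ∧
    ∀ a b c : Fin n, a ≠ b → a ≠ c → b ≠ c →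
      ¬ ∃ l : Ln, τ a ∈ l ∧ τ b ∈ l ∧ τ c ∈ l

/-- A strong realization in a projective plane `(Pt, Ln)` of a superfiguration with point
set `P` and line set `L`: an injective map from the points of the superfiguration to `Pt`
such that three distinct points lie on a common full line of the superfiguration if and
only if their images are collinear in the plane. -/
def IsStrongReal {Pt : Type} (Ln : Type) [Membership Pt Ln]
    (P : Finset ℕ) (L : Finset (Finset ℕ)) (σ : {x // x ∈ P} → Pt) : Prop :=
  Function.Injective σ ∧
    ∀ a b c : {x // x ∈ P}, a ≠ b → a ≠ c → b ≠ c →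
      ((∃ l ∈ L, ↑a ∈ l ∧ ↑b ∈ l ∧ ↑c ∈ l ∧ 3 ≤ l.card) ↔
        ∃ m : Ln, σ a ∈ m ∧ σ b ∈ m ∧ σ c ∈ m)

open Classical in
/-- Relation-level helper: representatives of classes. -/
lemma exists_reps {X : Type} (r : X → X → Prop) (G : X → Prop) (U : Finset X)
    (hrefl : ∀ a, G a → r a a)
    (heuc : ∀ a b u, G a → G b → r a u → r b u → r a b)
    (hU : ∀ a, G a → ∃ u ∈ U, r a u) :
    ∃ R : Finset X, (∀ s ∈ R, G s) ∧ ∀ s, G s → ∃! t, t ∈ R ∧ r s t := by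
  have hsymm : ∀ a b, G a → G b → r a b → r b a := fun a b ha hb h =>
    heuc b a b hb ha (hrefl b hb) h
  let S : Setoid {x // G x} :=
    { r := fun a b => r a.1 b.1
      iseqv := ⟨fun a => hrefl _ a.2, fun {a b} h => hsymm _ _ a.2 b.2 h,
        fun {a b c} h1 h2 => heuc _ _ b.1 a.2 c.2 h1 (hsymm _ _ b.2 c.2 h2)⟩ }
  have key : ∀ c : Quotient S, ∃ u : {u // u ∈ U}, r c.out.1 u.1 := by
    intro c
    obtain ⟨u, hu, h⟩ := hU c.out.1 c.out.2
    exact ⟨⟨u, hu⟩, h⟩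
  choose f hf using key
  have hfin : Finite (Quotient S) := by
    refine Finite.of_injective f ?_
    intro c d hcd
    have h1 := hf c
    have h2 := hf d
    rw [← hcd] at h2
    have h3 : r c.out.1 d.out.1 := heuc _ _ _ c.out.2 d.out.2 h1 h2
    rw [← c.out_eq, ← d.out_eq]
    exact Quotient.sound h3
  have := Fintype.ofFinite (Quotient S)
  refine ⟨Finset.univ.image (fun c : Quotient S => c.out.1), ?_, ?_⟩
  · intro s hs
    obtain ⟨c, -, rfl⟩ := Finset.mem_image.1 hs
    exact c.out.2
  · intro s hs
    refine ⟨(Quotient.mk S ⟨s, hs⟩).out.1, ⟨?_, ?_⟩, ?_⟩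
    · exact Finset.mem_image_of_mem _ (Finset.mem_univ _)
    · have h : S.r (Quotient.mk S ⟨s, hs⟩).out ⟨s, hs⟩ := Quotient.mk_out (s := S) ⟨s, hs⟩
      exact hsymm _ _ (Subtype.property _) hs h
    · rintro t ⟨ht, hst⟩
      obtain ⟨c, -, rfl⟩ := Finset.mem_image.1 ht
      have : Quotient.mk S ⟨s, hs⟩ = c := by
        rw [← c.out_eq]
        exact Quotient.sound hst
      rw [this]

lemma LSIso_refl (s : Finset ℕ × Finset (Finset ℕ)) : LSIso s s :=
  ⟨id, Set.bijOn_id _, by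
    have : Finset.image (id : ℕ → ℕ) = id := funext fun l => Finset.image_id
    rw [this, Finset.image_id]⟩

lemma LSIso_euc (a b u : Finset ℕ × Finset (Finset ℕ)) (hb : ∀ l ∈ b.2, l ⊆ b.1)
    (h1 : LSIso a u) (h2 : LSIso b u) : LSIso a b := by
  obtain ⟨e, he, hL⟩ := h1
  obtain ⟨f, hf, hM⟩ := h2
  refine ⟨Function.invFunOn f b.1 ∘ e, ?_, ?_⟩
  · exact (Set.InvOn.bijOn (f := Function.invFunOn f b.1) (f' := f)
      ⟨hf.invOn_invFunOn.2, hf.invOn_invFunOn.1⟩ hf.surjOn.mapsTo_invFunOn hf.mapsTo).comp he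
  · have : ∀ l ∈ b.2, (l.image f).image (Function.invFunOn f b.1) = l := by
      intro l hl
      rw [Finset.image_image]
      conv_rhs => rw [← Finset.image_id (s := l)]
      refine Finset.image_congr ?_
      intro x hx
      exact hf.invOn_invFunOn.1 (hb l hl hx)
    have h3 : b.2 = u.2.image (Finset.image (Function.invFunOn f b.1)) := by
      rw [hM, Finset.image_image]
      conv_lhs => rw [← Finset.image_id (s := b.2)]
      refine Finset.image_congr ?_
      intro l hl
      exact (this l hl).symm
    rw [h3, hL, Finset.image_image]
    refine Finset.image_congr ?_
    intro l hl
    simp [Finset.image_image]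

lemma exists_super_reps (n : ℕ) : ∃ R : Finset (Finset ℕ × Finset (Finset ℕ)),
    (∀ s ∈ R, IsSuperfiguration s.1 s.2 ∧ s.1.card ≤ n) ∧
    ∀ s : Finset ℕ × Finset (Finset ℕ), (IsSuperfiguration s.1 s.2 ∧ s.1.card ≤ n) →
      ∃! t, t ∈ R ∧ LSIso s t := by
  refine exists_reps LSIso (fun s => IsSuperfiguration s.1 s.2 ∧ s.1.card ≤ n)
    ((Finset.range n).powerset ×ˢ (Finset.range n).powerset.powerset)
    (fun a _ => LSIso_refl a)
    (fun a b u _ hb => LSIso_euc a b u (fun l hl => (hb.1.1.1 l hl).1)) ?_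
  rintro ⟨P, L⟩ ⟨h, hc⟩
  simp only at h hc
  let g := P.equivFin
  let e : ℕ → ℕ := fun x => if hx : x ∈ P then (g ⟨x, hx⟩ : ℕ) else 0
  have hinj : Set.InjOn e P := by
    intro x hx y hy hxy
    have hx' : x ∈ P := hx
    have hy' : y ∈ P := hy
    simp only [e, hx', hy', dif_pos] at hxy
    have := g.injective (Fin.ext hxy)
    simpa using this
  have hr : ∀ x ∈ P, e x < n := by
    intro x hx
    simp only [e, hx, dif_pos]
    exact lt_of_lt_of_le (Fin.is_lt _) hc
  refine ⟨(P.image e, L.image (Finset.image e)), ?_, e, ?_, rfl⟩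
  · simp only [Finset.mem_product, Finset.mem_powerset]
    constructor
    · intro y hy
      obtain ⟨x, hx, rfl⟩ := Finset.mem_image.1 hy
      exact Finset.mem_range.2 (hr x hx)
    · intro l hl
      obtain ⟨m, hm, rfl⟩ := Finset.mem_image.1 hl
      rw [Finset.mem_powerset]
      intro y hy
      obtain ⟨x, hx, rfl⟩ := Finset.mem_image.1 hy
      exact Finset.mem_range.2 (hr x ((h.1.1 m hm).1 hx))
  · simp only [Finset.coe_image]
    exact hinj.bijOn_image

/-- Bundled finite projective plane of order `q`. -/
structure Pl : Type 1 where
  q : ℕ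
  Pt : Type
  Ln : Type
  [mem : Membership Pt Ln]
  [finPt : Finite Pt]
  [finLn : Finite Ln]
  [pp : Configuration.ProjectivePlane Pt Ln]
  hq : ∀ l : Ln, Nat.card {x : Pt // x ∈ l} = q + 1

attribute [instance] Pl.mem Pl.finPt Pl.finLn Pl.pp

/-- Collinearity in a plane. -/
def Pl.coll (Q : Pl) (a b c : Q.Pt) : Prop := ∃ l : Q.Ln, a ∈ l ∧ b ∈ l ∧ c ∈ l

lemma Pl.exists_line (Q : Pl) : Nonempty Q.Ln := by
  obtain ⟨p₁, p₂, p₃, l₁, l₂, l₃, h⟩ :=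
    Configuration.ProjectivePlane.exists_config (P := Q.Pt) (L := Q.Ln)
  exact ⟨l₁⟩

lemma Pl.order (Q : Pl) : Configuration.ProjectivePlane.order Q.Pt Q.Ln = Q.q := by
  obtain ⟨l⟩ := Q.exists_line
  have h1 := Q.hq l
  have h2 := Configuration.ProjectivePlane.pointCount_eq Q.Pt l
  unfold Configuration.pointCount at h2
  omega

lemma Pl.card_pt (Q : Pl) : Nat.card Q.Pt = Q.q ^ 2 + Q.q + 1 := by
  have := Fintype.ofFinite Q.Pt
  have := Fintype.ofFinite Q.Ln
  rw [Nat.card_eq_fintype_card, Configuration.ProjectivePlane.card_points Q.Pt Q.Ln, Q.order]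

lemma Pl.line_eq (Q : Pl) {a b : Q.Pt} {l m : Q.Ln} (hab : a ≠ b) (h1 : a ∈ l) (h2 : b ∈ l)
    (h3 : a ∈ m) (h4 : b ∈ m) : l = m :=
  (Configuration.Nondegenerate.eq_or_eq h1 h2 h3 h4).resolve_left hab

lemma Pl.join (Q : Pl) (a b : Q.Pt) : ∃ l : Q.Ln, a ∈ l ∧ b ∈ l := by
  by_cases h : a = b
  · subst h
    by_contra hc
    push Not at hc
    have hc' : ∀ l : Q.Ln, a ∉ l := fun l hl => hc l hl hl
    obtain ⟨p₁, p₂, p₃, l₁, l₂, l₃, h⟩ :=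
      Configuration.ProjectivePlane.exists_config (P := Q.Pt) (L := Q.Ln)
    have hn : ∃ p : Q.Pt, a ≠ p := by
      by_contra hcon
      push Not at hcon
      rw [← hcon p₂, ← hcon p₃] at h
      have := h.2.2.2.2.1
      first
        | exact hc' _ (by tauto)
    obtain ⟨p, hp⟩ := hn
    exact hc' _ (Configuration.HasLines.mkLine_ax hp).1
  · exact ⟨_, Configuration.HasLines.mkLine_ax h⟩

lemma Pl.coll_triv (Q : Pl) {a b c : Q.Pt} (h : a = b ∨ a = c ∨ b = c) : Q.coll a b c := by
  rcases h with rfl | rfl | rfl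
  · obtain ⟨l, h1, h2⟩ := Q.join a c
    exact ⟨l, h1, h1, h2⟩
  · obtain ⟨l, h1, h2⟩ := Q.join a b
    exact ⟨l, h1, h2, h1⟩
  · obtain ⟨l, h1, h2⟩ := Q.join a b
    exact ⟨l, h1, h2, h2⟩

lemma Pl.coll_mem (Q : Pl) {a b c : Q.Pt} {l : Q.Ln} (hbc : b ≠ c) (hb : b ∈ l) (hc : c ∈ l) :
    Q.coll a b c ↔ a ∈ l := by
  constructor
  · rintro ⟨m, h1, h2, h3⟩
    rwa [Q.line_eq hbc hb hc h2 h3]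
  · intro h
    exact ⟨l, h, hb, hc⟩

lemma Pl.inter (Q : Pl) {l m : Q.Ln} (h : l ≠ m) : Nat.card {x : Q.Pt // x ∈ l ∧ x ∈ m} = 1 := by
  rw [Nat.card_eq_one_iff_unique]
  have hp := Configuration.HasPoints.mkPoint_ax (P := Q.Pt) h
  refine ⟨⟨?_⟩, ⟨⟨_, hp⟩⟩⟩
  rintro ⟨x, hx⟩ ⟨y, hy⟩
  by_contra hxy
  exact h (Q.line_eq (fun e => hxy (Subtype.ext e)) hx.1 hy.1 hx.2 hy.2)

/-- A map realizes exactly the given ternary relation. -/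
def Reals {α : Type} (T : α → α → α → Prop) (Q : Pl) (σ : α → Q.Pt) : Prop :=
  Function.Injective σ ∧ ∀ a b c, T a b c ↔ Q.coll (σ a) (σ b) (σ c)

/-- Number of realizations. -/
noncomputable def cnt {α : Type} (T : α → α → α → Prop) (Q : Pl) : ℤ :=
  (Nat.card {σ : α → Q.Pt // Reals T Q σ} : ℤ)

/-- The relations coming from linear spaces. -/
structure Lin {α : Type} (T : α → α → α → Prop) : Prop where
  triv : ∀ a b, T a a b
  rot : ∀ {a b c}, T a b c → T b c a
  swap : ∀ {a b c}, T a b c → T a c b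
  trans : ∀ {a b c d}, a ≠ b → T a b c → T a b d → T a c d

lemma Reals.lin {α : Type} {T : α → α → α → Prop} {Q : Pl} {σ : α → Q.Pt} (h : Reals T Q σ) :
    Lin T := by
  refine ⟨fun a b => (h.2 _ _ _).2 (Q.coll_triv (Or.inl rfl)), ?_, ?_, ?_⟩
  · intro a b c h1
    obtain ⟨l, h2, h3, h4⟩ := (h.2 _ _ _).1 h1
    exact (h.2 _ _ _).2 ⟨l, h3, h4, h2⟩
  · intro a b c h1
    obtain ⟨l, h2, h3, h4⟩ := (h.2 _ _ _).1 h1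
    exact (h.2 _ _ _).2 ⟨l, h2, h4, h3⟩
  · intro a b c d hab h1 h2
    obtain ⟨l, h3, h4, h5⟩ := (h.2 _ _ _).1 h1
    obtain ⟨m, h6, h7, h8⟩ := (h.2 _ _ _).1 h2
    have := Q.line_eq (fun e => hab (h.1 e)) h3 h4 h6 h7
    subst this
    exact (h.2 _ _ _).2 ⟨l, h3, h5, h8⟩

lemma Lin.triv' {α : Type} {T : α → α → α → Prop} (h : Lin T) {a b c : α}
    (h1 : a = b ∨ a = c ∨ b = c) : T a b c := by
  rcases h1 with rfl | rfl | rfl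
  · exact h.triv _ _
  · exact h.swap (h.triv _ _)
  · exact h.rot (h.rot (h.triv _ _))

/-- Number of strong realizations of an encoded linear space. -/
noncomputable def scnt (s : Finset ℕ × Finset (Finset ℕ)) (Q : Pl) : ℤ :=
  (Nat.card {σ : {x // x ∈ s.1} → Q.Pt // IsStrongReal Q.Ln s.1 s.2 σ} : ℤ)

/-- Reindexing of strong realizations: counts agree. -/
lemma scnt_congr {α : Type} (T : α → α → α → Prop) (s : Finset ℕ × Finset (Finset ℕ))
    (e : α ≃ {x // x ∈ s.1}) (htriv : ∀ a b c, (a = b ∨ a = c ∨ b = c) → T a b c)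
    (h : ∀ a b c, a ≠ b → a ≠ c → b ≠ c → ((∃ l ∈ s.2, (e a : ℕ) ∈ l ∧ (e b : ℕ) ∈ l ∧
      (e c : ℕ) ∈ l ∧ 3 ≤ l.card) ↔ T a b c)) (Q : Pl) : cnt T Q = scnt s Q := by
  unfold cnt scnt
  congr 1
  refine Nat.card_congr (Equiv.subtypeEquiv (Equiv.arrowCongr e (Equiv.refl _)) ?_)
  intro σ
  unfold Reals IsStrongReal
  constructor
  · rintro ⟨h1, h2⟩
    refine ⟨?_, ?_⟩
    · intro a b hab
      simpa using h1 hab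
    · intro a b c hab hac hbc
      obtain ⟨a, rfl⟩ := e.surjective a
      obtain ⟨b, rfl⟩ := e.surjective b
      obtain ⟨c, rfl⟩ := e.surjective c
      rw [h a b c (fun k => hab (k ▸ rfl)) (fun k => hac (k ▸ rfl)) (fun k => hbc (k ▸ rfl)), h2]
      simp [Pl.coll]
  · rintro ⟨h1, h2⟩
    have h1' : Function.Injective σ := by
      intro a b hab
      have := @h1 (e a) (e b) (by simpa using hab)
      exact e.injective this
    refine ⟨h1', ?_⟩
    intro a b c
    by_cases ht : a = b ∨ a = c ∨ b = c
    · refine iff_of_true (htriv _ _ _ ht) (Q.coll_triv ?_)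
      rcases ht with rfl | rfl | rfl <;> simp
    · push Not at ht
      rw [← h a b c ht.1 ht.2.1 ht.2.2, h2 (e a) (e b) (e c) (by simpa using ht.1)
        (by simpa using ht.2.1) (by simpa using ht.2.2)]
      simp [Pl.coll]

/-- The relation attached to an encoded linear space. -/
def relOf (s : Finset ℕ × Finset (Finset ℕ)) (a b c : {x // x ∈ s.1}) : Prop :=
  (a = b ∨ a = c ∨ b = c) ∨
    ∃ l ∈ s.2, (a : ℕ) ∈ l ∧ (b : ℕ) ∈ l ∧ (c : ℕ) ∈ l ∧ 3 ≤ l.card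

lemma scnt_iso (s t : Finset ℕ × Finset (Finset ℕ)) (hs : ∀ l ∈ s.2, l ⊆ s.1)
    (h : LSIso s t) (Q : Pl) : scnt s Q = scnt t Q := by
  obtain ⟨e, he, hL⟩ := h
  have h1 : cnt (relOf s) Q = scnt s Q := by
    refine scnt_congr (relOf s) s (Equiv.refl _) (fun a b c h => Or.inl h) ?_ Q
    intro a b c h1 h2 h3
    simp [relOf, h1, h2, h3]
  rw [← h1]
  let E : {x // x ∈ s.1} ≃ {x // x ∈ t.1} := Set.BijOn.equiv e he
  refine scnt_congr (relOf s) t E (fun a b c h => Or.inl h) ?_ Q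
  intro a b c h1 h2 h3
  have hE : ∀ a, (E a : ℕ) = e a := fun a => rfl
  have hm : ∀ l ∈ s.2, ∀ a : {x // x ∈ s.1}, e a ∈ l.image e ↔ (a : ℕ) ∈ l := by
    intro l hl a
    constructor
    · intro ha
      obtain ⟨x, hx, hxa⟩ := Finset.mem_image.1 ha
      rw [← he.injOn (hs l hl hx) a.2 hxa]
      exact hx
    · exact Finset.mem_image_of_mem _
  have hc : ∀ l ∈ s.2, (l.image e).card = l.card := by
    intro l hl
    exact Finset.card_image_of_injOn (he.injOn.mono (fun x hx => hs l hl hx))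
  simp only [relOf, h1, h2, h3, false_or, hE, hL]
  constructor
  · rintro ⟨m, hm', h4⟩
    obtain ⟨l, hl, rfl⟩ := Finset.mem_image.1 hm'
    rw [hm l hl, hm l hl, hm l hl, hc l hl] at h4
    exact ⟨l, hl, h4⟩
  · rintro ⟨l, hl, h4⟩
    refine ⟨_, Finset.mem_image_of_mem _ hl, ?_⟩
    rw [hm l hl, hm l hl, hm l hl, hc l hl]
    exact h4

/-- Functions on planes that are polynomial combinations of counts of the representatives. -/
def Good (R : Finset (Finset ℕ × Finset (Finset ℕ))) (F : Pl → ℤ) : Prop :=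
  ∃ coef : Finset ℕ × Finset (Finset ℕ) → Polynomial ℤ,
    ∀ Q : Pl, F Q = ∑ s ∈ R, (coef s).eval (Q.q : ℤ) * scnt s Q

lemma Good.zero (R) : Good R (fun _ => 0) := ⟨0, by simp⟩

lemma Good.sub {R} {F G : Pl → ℤ} (hF : Good R F) (hG : Good R G) :
    Good R (fun Q => F Q - G Q) := by
  obtain ⟨f, hf⟩ := hF
  obtain ⟨g, hg⟩ := hG
  exact ⟨f - g, fun Q => by simp [hf, hg, sub_mul, Finset.sum_sub_distrib]⟩

lemma Good.add {R} {F G : Pl → ℤ} (hF : Good R F) (hG : Good R G) :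
    Good R (fun Q => F Q + G Q) := by
  obtain ⟨f, hf⟩ := hF
  obtain ⟨g, hg⟩ := hG
  exact ⟨f + g, fun Q => by simp [hf, hg, add_mul, Finset.sum_add_distrib]⟩

lemma Good.mul {R} {F : Pl → ℤ} (hF : Good R F) (p : Polynomial ℤ) :
    Good R (fun Q => p.eval (Q.q : ℤ) * F Q) := by
  obtain ⟨f, hf⟩ := hF
  exact ⟨fun s => p * f s, fun Q => by simp [hf, Finset.mul_sum, mul_assoc]⟩

lemma Good.sum {R} {ι : Type} (S : Finset ι) {F : ι → Pl → ℤ} (hF : ∀ i ∈ S, Good R (F i)) :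
    Good R (fun Q => ∑ i ∈ S, F i Q) := by
  classical
  induction S using Finset.induction_on with
  | empty => simpa using Good.zero R
  | insert a S ha ih =>
    simp only [Finset.sum_insert ha]
    exact (hF a (Finset.mem_insert_self _ _)).add
      (ih fun i hi => hF i (Finset.mem_insert_of_mem hi))

lemma Good.mem {R : Finset (Finset ℕ × Finset (Finset ℕ))} {s} (hs : s ∈ R) :
    Good R (scnt s) := by
  classical
  refine ⟨fun t => if t = s then 1 else 0, fun Q => ?_⟩
  rw [Finset.sum_eq_single s]
  · simp
  · intro b _ hb
    simp [hb]
  · intro h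
    exact absurd hs h

lemma Lin.tri {α : Type} {T : α → α → α → Prop} (h : Lin T) {a b c d e : α} (hab : a ≠ b)
    (hc : T a b c) (hd : T a b d) (he : T a b e) : T c d e := by
  by_cases hca : c = a
  · subst hca
    exact h.trans hab hd he
  · have h1 := h.trans hab hc hd
    have h2 := h.trans hab hc he
    exact h.trans hca (h.swap (h.rot h1)) (h.swap (h.rot h2))

open Classical in
/-- The line through two points. -/
noncomputable def ln {α : Type} [Fintype α] (T : α → α → α → Prop) (a b : α) : Finset α :=
  Finset.univ.filter (T a b)

lemma mem_ln {α : Type} [Fintype α] {T : α → α → α → Prop} {a b c : α} :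
    c ∈ ln T a b ↔ T a b c := by simp [ln]

lemma Lin.ln_eq {α : Type} [Fintype α] {T : α → α → α → Prop} (h : Lin T) {a b c d : α}
    (hab : a ≠ b) (hcd : c ≠ d) (hc : T a b c) (hd : T a b d) : ln T a b = ln T c d := by
  ext e
  rw [mem_ln, mem_ln]
  refine ⟨fun he => h.tri hab hc hd he, fun he => ?_⟩
  exact h.tri hcd (h.tri hab hc hd (h.triv' (by simp))) (h.tri hab hc hd (h.triv' (by simp))) he

open Classical in
/-- Full lines through a point. -/
noncomputable def fullLines {α : Type} [Fintype α] (T : α → α → α → Prop) (x : α) :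
    Finset (Finset α) :=
  Finset.univ.filter fun l => (∃ a b, a ≠ b ∧ l = ln T a b) ∧ x ∈ l ∧ 3 ≤ l.card

lemma Lin.super {α : Type} [Fintype α] {T : α → α → α → Prop} (h : Lin T)
    (hx : ∀ x, 3 ≤ (fullLines T x).card) :
    ∃ s : Finset ℕ × Finset (Finset ℕ), IsSuperfiguration s.1 s.2 ∧
      s.1.card = Fintype.card α ∧ ∀ Q : Pl, cnt T Q = scnt s Q := by
  classical
  let f : α → ℕ := fun a => (Fintype.equivFin α a : ℕ)
  have hf : Function.Injective f := fun a b hab =>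
    (Fintype.equivFin α).injective (Fin.ext hab)
  let P : Finset ℕ := Finset.univ.image f
  let L : Finset (Finset ℕ) :=
    (Finset.univ.filter fun p : α × α => p.1 ≠ p.2).image fun p => (ln T p.1 p.2).image f
  have hL : ∀ m, m ∈ L ↔ ∃ a b, a ≠ b ∧ m = (ln T a b).image f := by
    intro m
    simp only [L, Finset.mem_image, Finset.mem_filter, Finset.mem_univ, true_and, Prod.exists]
    constructor
    · rintro ⟨a, b, hab, rfl⟩
      exact ⟨a, b, hab, rfl⟩
    · rintro ⟨a, b, hab, rfl⟩
      exact ⟨a, b, hab, rfl⟩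
  have hP : ∀ p, p ∈ P ↔ ∃ a, f a = p := by
    intro p
    simp [P]
  have hfm : ∀ (l : Finset α) a, f a ∈ l.image f ↔ a ∈ l := fun l a =>
    hf.mem_finset_image
  have hfc : ∀ l : Finset α, (l.image f).card = l.card := fun l =>
    Finset.card_image_of_injective _ hf
  refine ⟨(P, L), ⟨⟨?_, ?_⟩, ?_⟩, ?_, ?_⟩
  · intro m hm
    obtain ⟨a, b, hab, rfl⟩ := (hL m).1 hm
    refine ⟨Finset.image_subset_image (Finset.subset_univ _), ?_⟩
    rw [hfc]
    have : ({a, b} : Finset α) ⊆ ln T a b := by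
      intro c hc
      rw [mem_ln]
      simp only [Finset.mem_insert, Finset.mem_singleton] at hc
      exact h.triv' (by tauto)
    calc 2 = ({a, b} : Finset α).card := (Finset.card_pair hab).symm
      _ ≤ _ := Finset.card_le_card this
  · intro p hp p' hp' hne
    obtain ⟨a, rfl⟩ := (hP _).1 hp
    obtain ⟨b, rfl⟩ := (hP _).1 hp'
    have hab : a ≠ b := fun e => hne (e ▸ rfl)
    refine ⟨(ln T a b).image f, ⟨(hL _).2 ⟨a, b, hab, rfl⟩, ?_, ?_⟩, ?_⟩
    · rw [hfm, mem_ln]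
      exact h.triv' (by simp)
    · rw [hfm, mem_ln]
      exact h.triv' (by simp)
    · rintro m ⟨hm, ha, hb⟩
      obtain ⟨c, d, hcd, rfl⟩ := (hL m).1 hm
      rw [hfm, mem_ln] at ha hb
      rw [h.ln_eq hcd hab ha hb]
  · intro p hp
    obtain ⟨a, rfl⟩ := (hP _).1 hp
    refine (hx a).trans ?_
    refine Finset.card_le_card_of_injOn (Finset.image f) ?_
      (Finset.image_injective hf).injOn
    intro l hl
    have hl' : l ∈ fullLines T a := hl
    simp only [fullLines, Finset.mem_filter, Finset.mem_univ, true_and] at hl'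
    obtain ⟨⟨c, d, hcd, rfl⟩, hal, h3⟩ := hl'
    simp only [Finset.coe_filter, Set.mem_ofPred_eq]
    rw [hfm, hfc]
    exact ⟨(hL _).2 ⟨c, d, hcd, rfl⟩, hal, h3⟩
  · simp only [P]
    rw [Finset.card_image_of_injective _ hf, Finset.card_univ]
  · intro Q
    let e : α ≃ {x // x ∈ P} := Equiv.ofBijective (fun a => ⟨f a, (hP _).2 ⟨a, rfl⟩⟩) (by
      constructor
      · intro a b hab
        exact hf (Subtype.ext_iff.1 hab)
      · rintro ⟨p, hp⟩
        obtain ⟨a, rfl⟩ := (hP _).1 hp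
        exact ⟨a, rfl⟩)
    have he : ∀ a, (e a : ℕ) = f a := fun a => rfl
    refine scnt_congr T (P, L) e (fun a b c => h.triv') ?_ Q
    intro a b c hab hac hbc
    simp only [he]
    constructor
    · rintro ⟨m, hm, h1, h2, h3, -⟩
      obtain ⟨c', d', hcd, rfl⟩ := (hL m).1 hm
      rw [hfm, mem_ln] at h1 h2 h3
      exact h.tri hcd h1 h2 h3
    · intro hT
      refine ⟨_, (hL _).2 ⟨a, b, hab, rfl⟩, ?_⟩
      rw [hfm, hfm, hfm, hfc, mem_ln, mem_ln, mem_ln]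
      refine ⟨h.triv' (by simp), h.triv' (by simp), hT, ?_⟩
      have : ({a, b, c} : Finset α) ⊆ ln T a b := by
        intro z hz
        rw [mem_ln]
        simp only [Finset.mem_insert, Finset.mem_singleton] at hz
        rcases hz with rfl | rfl | rfl
        · exact h.triv' (by simp)
        · exact h.triv' (by simp)
        · exact hT
      calc 3 = ({a, b, c} : Finset α).card := (Finset.card_eq_three.2 ⟨a, b, c, hab, hac, hbc, rfl⟩).symm
        _ ≤ _ := Finset.card_le_card this

/-- Restriction of a relation to the complement of a point. -/
def restr {α : Type} (T : α → α → α → Prop) (x : α) :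
    {y // y ≠ x} → {y // y ≠ x} → {y // y ≠ x} → Prop := fun a b c => T a b c

/-- Weak incidence condition for the image of `x`. -/
def Weak {α : Type} (T : α → α → α → Prop) (x : α) (Q : Pl) (τ : {y // y ≠ x} → Q.Pt)
    (y : Q.Pt) : Prop :=
  ∀ a b : {y // y ≠ x}, T x a b → Q.coll y (τ a) (τ b)

lemma Lin.mem_full {α : Type} [Fintype α] {T : α → α → α → Prop} (h : Lin T) {x a b : α}
    (hxa : x ≠ a) (hxb : x ≠ b) (hab : a ≠ b) (hT : T x a b) : ln T x a ∈ fullLines T x := by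
  classical
  simp only [fullLines, Finset.mem_filter, Finset.mem_univ, true_and]
  refine ⟨⟨x, a, hxa, rfl⟩, mem_ln.2 (h.triv' (by simp)), ?_⟩
  have : ({x, a, b} : Finset α) ⊆ ln T x a := by
    intro z hz
    rw [mem_ln]
    simp only [Finset.mem_insert, Finset.mem_singleton] at hz
    rcases hz with rfl | rfl | rfl
    · exact h.triv' (by simp)
    · exact h.triv' (by simp)
    · exact hT
  calc 3 = ({x, a, b} : Finset α).card :=
        (Finset.card_eq_three.2 ⟨x, a, b, hxa, hxb, hab, rfl⟩).symm
    _ ≤ _ := Finset.card_le_card this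

lemma Lin.full_pair {α : Type} [Fintype α] {T : α → α → α → Prop} (h : Lin T) {x : α}
    {l : Finset α} (hl : l ∈ fullLines T x) :
    ∃ a b : {y // y ≠ x}, a ≠ b ∧ T x a b ∧ l = ln T x a ∧ l = ln T a b := by
  classical
  simp only [fullLines, Finset.mem_filter, Finset.mem_univ, true_and] at hl
  obtain ⟨⟨c, d, hcd, rfl⟩, hx, h3⟩ := hl
  have : 1 < ((ln T c d).erase x).card := by
    rw [Finset.card_erase_of_mem hx]
    omega
  obtain ⟨a, ha, b, hb, hab⟩ := Finset.one_lt_card.1 this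
  rw [Finset.mem_erase, mem_ln] at ha hb
  rw [mem_ln] at hx
  exact ⟨⟨a, ha.1⟩, ⟨b, hb.1⟩, fun e => hab (Subtype.ext_iff.1 e), h.tri hcd hx ha.2 hb.2,
    h.ln_eq hcd ha.1.symm hx ha.2, h.ln_eq hcd hab ha.2 hb.2⟩

/-- The number of points satisfying the weak condition is a polynomial in the order. -/
lemma weak_count {α : Type} [Fintype α] {T : α → α → α → Prop} (h : Lin T) (x : α)
    (hlight : (fullLines T x).card < 3) :
    ∃ p : Polynomial ℤ, ∀ (Q : Pl) (τ : {y // y ≠ x} → Q.Pt), Reals (restr T x) Q τ →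
      (Nat.card {y : Q.Pt // Weak T x Q τ y} : ℤ) = p.eval (Q.q : ℤ) := by
  classical
  -- points on a common full line
  have hline : ∀ (Q : Pl) (τ : {y // y ≠ x} → Q.Pt), Reals (restr T x) Q τ →
      ∀ (a b : {y // y ≠ x}) (m : Q.Ln), a ≠ b → τ a ∈ m → τ b ∈ m →
      ∀ c : {y // y ≠ x}, T a b c ↔ τ c ∈ m := by
    intro Q τ hτ a b m hab ha hb c
    have h1 := hτ.2 c a b
    rw [Q.coll_mem (fun e => hab (hτ.1 e)) ha hb] at h1
    rw [← h1]
    exact ⟨fun k => h.rot (h.rot k), fun k => h.rot k⟩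
  have h012 : (fullLines T x).card = 0 ∨ (fullLines T x).card = 1 ∨
    (fullLines T x).card = 2 := by omega
  rcases h012 with h0 | h1 | h2
  · refine ⟨Polynomial.X ^ 2 + Polynomial.X + 1, ?_⟩
    intro Q τ hτ
    have hall : ∀ y, Weak T x Q τ y := by
      intro y a b hT
      by_cases hab : a = b
      · exact Q.coll_triv (by simp [hab])
      · have := h.mem_full a.2.symm b.2.symm (fun e => hab (Subtype.ext e)) hT
        rw [Finset.card_eq_zero.1 h0] at this
        simp at this
    rw [Nat.card_congr (Equiv.subtypeUnivEquiv hall), Q.card_pt]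
    simp
  · obtain ⟨l, hl⟩ := Finset.card_eq_one.1 h1
    obtain ⟨a, b, hab, hT, hla, hlab⟩ := h.full_pair (x := x) (l := l) (by simp [hl])
    refine ⟨Polynomial.X + 1, ?_⟩
    intro Q τ hτ
    obtain ⟨m, ham, hbm⟩ := Q.join (τ a) (τ b)
    have key : ∀ y, Weak T x Q τ y ↔ y ∈ m := by
      intro y
      constructor
      · intro hy
        exact (Q.coll_mem (fun e => hab (hτ.1 e)) ham hbm).1 (hy a b hT)
      · intro hy c d hT'
        by_cases hcd : c = d
        · exact Q.coll_triv (by simp [hcd])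
        · have := h.mem_full c.2.symm d.2.symm (fun e => hcd (Subtype.ext e)) hT'
          rw [hl, Finset.mem_singleton] at this
          have hc : (c : α) ∈ l := by
            rw [← this, mem_ln]
            exact h.triv' (by simp)
          have hd : (d : α) ∈ l := by
            rw [← this, mem_ln]
            exact hT'
          rw [hlab, mem_ln, hline Q τ hτ a b m hab ham hbm] at hc hd
          exact ⟨m, hy, hc, hd⟩
    rw [Nat.card_congr (Equiv.subtypeEquivRight key), Q.hq]
    simp
  · obtain ⟨l, l', hll, hl⟩ := Finset.card_eq_two.1 h2
    obtain ⟨a, b, hab, hT, hla, hlab⟩ := h.full_pair (x := x) (l := l) (by simp [hl])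
    obtain ⟨a', b', hab', hT', hla', hlab'⟩ := h.full_pair (x := x) (l := l') (by simp [hl])
    refine ⟨1, ?_⟩
    intro Q τ hτ
    obtain ⟨m, ham, hbm⟩ := Q.join (τ a) (τ b)
    obtain ⟨m', ham', hbm'⟩ := Q.join (τ a') (τ b')
    have hmm : m ≠ m' := by
      intro e
      subst e
      have h3 := (hline Q τ hτ a b m hab ham hbm a').2 ham'
      have h4 := (hline Q τ hτ a b m hab ham hbm b').2 hbm'
      apply hll
      rw [hlab, hlab']
      exact h.ln_eq (fun e => hab (Subtype.ext e)) (fun e => hab' (Subtype.ext e)) h3 h4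
    have key : ∀ y, Weak T x Q τ y ↔ y ∈ m ∧ y ∈ m' := by
      intro y
      constructor
      · intro hy
        exact ⟨(Q.coll_mem (fun e => hab (hτ.1 e)) ham hbm).1 (hy a b hT),
          (Q.coll_mem (fun e => hab' (hτ.1 e)) ham' hbm').1 (hy a' b' hT')⟩
      · intro hy c d hT''
        by_cases hcd : c = d
        · exact Q.coll_triv (by simp [hcd])
        · have := h.mem_full c.2.symm d.2.symm (fun e => hcd (Subtype.ext e)) hT''
          have hc : (c : α) ∈ ln T x c := by
            rw [mem_ln]
            exact h.triv' (by simp)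
          have hd : (d : α) ∈ ln T x c := by
            rw [mem_ln]
            exact hT''
          rw [hl, Finset.mem_insert, Finset.mem_singleton] at this
          rcases this with this | this
          · rw [this, hlab, mem_ln, hline Q τ hτ a b m hab ham hbm] at hc hd
            exact ⟨m, hy.1, hc, hd⟩
          · rw [this, hlab', mem_ln, hline Q τ hτ a' b' m' hab' ham' hbm'] at hc hd
            exact ⟨m', hy.2, hc, hd⟩
    rw [Nat.card_congr (Equiv.subtypeEquivRight key), Q.inter hmm]
    simp

lemma Pl.coll_rot (Q : Pl) {a b c : Q.Pt} (h : Q.coll a b c) : Q.coll b c a := by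
  obtain ⟨l, h1, h2, h3⟩ := h
  exact ⟨l, h2, h3, h1⟩

lemma weak_ext {α : Type} {T : α → α → α → Prop} (h : Lin T) (x : α) (Q : Pl)
    (σ : α → Q.Pt) (hr : Reals (restr T x) Q (fun z => σ z.1))
    (hw : Weak T x Q (fun z => σ z.1) (σ x)) (a b c : α) (hT : T a b c) :
    Q.coll (σ a) (σ b) (σ c) := by
  by_cases ht : a = b ∨ a = c ∨ b = c
  · refine Q.coll_triv ?_
    rcases ht with rfl | rfl | rfl <;> simp
  · push Not at ht
    obtain ⟨hab, hac, hbc⟩ := ht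
    by_cases ha : a = x
    · subst ha
      exact hw ⟨b, hab.symm⟩ ⟨c, hac.symm⟩ hT
    · by_cases hb : b = x
      · subst hb
        exact Q.coll_rot (Q.coll_rot (hw ⟨c, hbc.symm⟩ ⟨a, ha⟩ (h.rot hT)))
      · by_cases hc : c = x
        · subst hc
          exact Q.coll_rot (hw ⟨a, ha⟩ ⟨b, hb⟩ (h.rot (h.rot hT)))
        · exact (hr.2 ⟨a, ha⟩ ⟨b, hb⟩ ⟨c, hc⟩).1 hT

open Classical in
/-- Combinatorial number of old points satisfying the weak condition. -/
noncomputable def oldCount {α : Type} (T : α → α → α → Prop) (x : α) : ℕ :=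
  Nat.card {p : {y // y ≠ x} // ∀ a b : {y // y ≠ x}, T x a b → T p a b}

lemma weak_old {α : Type} [Fintype α] {T : α → α → α → Prop} (x : α) (Q : Pl)
    (τ : {y // y ≠ x} → Q.Pt) (hr : Reals (restr T x) Q τ) :
    Nat.card {y : Q.Pt // Weak T x Q τ y ∧ y ∉ Set.range τ} + oldCount T x =
      Nat.card {y : Q.Pt // Weak T x Q τ y} := by
  classical
  have := Fintype.ofFinite Q.Pt
  have h1 : oldCount T x = Nat.card {y : Q.Pt // Weak T x Q τ y ∧ y ∈ Set.range τ} := by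
    refine Nat.card_congr (Equiv.ofBijective
      (fun p => ⟨τ p.1, fun a b hT => (hr.2 _ _ _).1 (p.2 a b hT), ⟨p.1, rfl⟩⟩) ⟨?_, ?_⟩)
    · intro p p' hpp
      exact Subtype.ext (hr.1 (Subtype.ext_iff.1 hpp))
    · rintro ⟨y, hy, p, rfl⟩
      exact ⟨⟨p, fun a b hT => (hr.2 _ _ _).2 (hy a b hT)⟩, rfl⟩
  rw [h1]
  simp only [Nat.card_eq_fintype_card, Fintype.card_subtype]
  rw [← Finset.filter_filter, ← Finset.filter_filter, add_comm]
  exact Finset.card_filter_add_card_filter_not _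

open Classical in
lemma recursion {α : Type} [Fintype α] {T : α → α → α → Prop} (h : Lin T) (x : α)
    (p : Polynomial ℤ)
    (hp : ∀ (Q : Pl) (τ : {y // y ≠ x} → Q.Pt), Reals (restr T x) Q τ →
      (Nat.card {y : Q.Pt // Weak T x Q τ y} : ℤ) = p.eval (Q.q : ℤ)) (Q : Pl) :
    ∑ U ∈ Finset.univ.filter (fun U : α → α → α → Prop => T ≤ U ∧ restr U x = restr T x),
      cnt U Q = (p - (oldCount T x : Polynomial ℤ)).eval (Q.q : ℤ) * cnt (restr T x) Q := by
  have := Fintype.ofFinite Q.Pt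
  let X : Finset (α → Q.Pt) := Finset.univ.filter fun σ => Function.Injective σ ∧
    Reals (restr T x) Q (fun z => σ z.1) ∧ ∀ a b c, T a b c → Q.coll (σ a) (σ b) (σ c)
  have hX : ∀ σ, σ ∈ X ↔ Function.Injective σ ∧
    Reals (restr T x) Q (fun z => σ z.1) ∧ ∀ a b c, T a b c → Q.coll (σ a) (σ b) (σ c) := by
    intro σ
    simp [X]
  let ty : (α → Q.Pt) → (α → α → α → Prop) := fun σ a b c => Q.coll (σ a) (σ b) (σ c)
  have e1 : ∑ U ∈ Finset.univ.filter (fun U : α → α → α → Prop =>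
      T ≤ U ∧ restr U x = restr T x), cnt U Q = (X.card : ℤ) := by
    rw [Finset.card_eq_sum_card_fiberwise (f := ty) (t := Finset.univ.filter
      (fun U : α → α → α → Prop => T ≤ U ∧ restr U x = restr T x))]
    · push_cast
      refine Finset.sum_congr rfl ?_
      intro U hU
      simp only [Finset.mem_filter, Finset.mem_univ, true_and] at hU
      unfold cnt
      rw [Nat.card_eq_fintype_card, Fintype.card_subtype]
      congr 2
      ext σ
      simp only [Finset.mem_filter, Finset.mem_univ, true_and, hX]
      constructor
      · intro hσ
        refine ⟨⟨hσ.1, ⟨hσ.1.comp Subtype.val_injective, ?_⟩, ?_⟩, ?_⟩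
        · intro a b c
          rw [← hU.2]
          exact hσ.2 a b c
        · intro a b c hT
          exact (hσ.2 a b c).1 (hU.1 a b c hT)
        · funext a b c
          exact propext (hσ.2 a b c).symm
      · rintro ⟨⟨h1, -, -⟩, rfl⟩
        exact ⟨h1, fun a b c => Iff.rfl⟩
    · intro σ hσ
      obtain ⟨h1, h2, h3⟩ := (hX σ).1 hσ
      simp only [Finset.coe_filter, Finset.mem_univ, true_and, Set.mem_ofPred_eq]
      refine ⟨fun a b c hT => h3 a b c hT, ?_⟩
      funext a b c
      exact propext (h2.2 a b c).symm
  have e2 : (X.card : ℤ) =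
      (p - (oldCount T x : Polynomial ℤ)).eval (Q.q : ℤ) * cnt (restr T x) Q := by
    rw [Finset.card_eq_sum_card_fiberwise (f := fun σ (z : {y // y ≠ x}) => σ z.1)
      (t := Finset.univ.filter (Reals (restr T x) Q))]
    · push_cast
      rw [Finset.sum_congr rfl (g := fun _ =>
        (p - (oldCount T x : Polynomial ℤ)).eval (Q.q : ℤ))]
      · rw [Finset.sum_const, cnt, Nat.card_eq_fintype_card, Fintype.card_subtype, nsmul_eq_mul,
          mul_comm]
      · intro τ hτ
        have hτ' : Reals (restr T x) Q τ := by simpa using hτ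
        have h1 := hp Q τ hτ'
        rw [← weak_old x Q τ hτ'] at h1
        have h2 : (X.filter fun σ => (fun z : {y // y ≠ x} => σ z.1) = τ).card =
            Nat.card {y : Q.Pt // Weak T x Q τ y ∧ y ∉ Set.range τ} := by
          rw [Nat.card_eq_fintype_card, Fintype.card_subtype]
          refine Finset.card_bij (fun σ _ => σ x) ?_ ?_ ?_
          · intro σ hσ
            obtain ⟨hσ1, rfl⟩ := Finset.mem_filter.1 hσ
            obtain ⟨h3, h4, h5⟩ := (hX σ).1 hσ1
            simp only [Finset.mem_filter, Finset.mem_univ, true_and]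
            refine ⟨fun a b hT => h5 _ _ _ hT, ?_⟩
            rintro ⟨z, hz⟩
            exact z.2 (h3 hz)
          · intro σ hσ σ' hσ' heq
            have h3 := (Finset.mem_filter.1 hσ).2
            have h4 := (Finset.mem_filter.1 hσ').2
            funext z
            by_cases hz : z = x
            · rw [hz]
              exact heq
            · have := congrFun (h3.trans h4.symm) ⟨z, hz⟩
              exact this
          · intro y hy
            simp only [Finset.mem_filter, Finset.mem_univ, true_and] at hy
            obtain ⟨hy1, hy2⟩ := hy
            let σ : α → Q.Pt := fun z => if hz : z = x then y else τ ⟨z, hz⟩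
            have hσx : σ x = y := by simp [σ]
            have hσr : (fun z : {y // y ≠ x} => σ z.1) = τ := by
              funext z
              simp [σ, z.2]
            have hσz : ∀ z (hz : z ≠ x), σ z = τ ⟨z, hz⟩ := fun z hz => by simp [σ, hz]
            refine ⟨σ, ?_, hσx⟩
            rw [Finset.mem_filter, hX]
            refine ⟨⟨?_, by rw [hσr]; exact hτ', ?_⟩, hσr⟩
            · intro z w hzw
              by_cases hz : z = x
              · by_cases hw : w = x
                · rw [hz, hw]
                · rw [hz, hσx, hσz w hw] at hzw
                  exact absurd ⟨_, hzw.symm⟩ hy2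
              · by_cases hw : w = x
                · rw [hw, hσx, hσz z hz] at hzw
                  exact absurd ⟨_, hzw⟩ hy2
                · rw [hσz z hz, hσz w hw] at hzw
                  exact Subtype.ext_iff.1 (hτ'.1 hzw)
            · refine weak_ext h x Q σ (by rw [hσr]; exact hτ') ?_
              rw [hσr, hσx]
              exact hy1
        rw [h2]
        push_cast at h1
        simp only [Polynomial.eval_sub, Polynomial.eval_natCast]
        linarith
    · intro σ hσ
      simpa using ((hX σ).1 hσ).2.1
  rw [e1, e2]

lemma good_cnt (n : ℕ) (R : Finset (Finset ℕ × Finset (Finset ℕ)))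
    (hR : ∀ s : Finset ℕ × Finset (Finset ℕ), (IsSuperfiguration s.1 s.2 ∧ s.1.card ≤ n) →
      ∃! t, t ∈ R ∧ LSIso s t) (k : ℕ) (hk : k ≤ n) :
    ∀ (α : Type) [Fintype α], Fintype.card α = k → ∀ T : α → α → α → Prop,
      Good R (cnt T) := by
  classical
  induction k with
  | zero =>
    intro α _ hα T
    have hem : IsEmpty α := Fintype.card_eq_zero_iff.1 hα
    have hlin : Lin T := ⟨fun a => hem.elim a, fun {a} => hem.elim a, fun {a} => hem.elim a,
      fun {a} => hem.elim a⟩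
    obtain ⟨s, hs, hsc, hcnt⟩ := hlin.super (fun x => hem.elim x)
    obtain ⟨t, ⟨ht, hst⟩, -⟩ := hR s ⟨hs, by omega⟩
    have : cnt T = scnt t := funext fun Q =>
      (hcnt Q).trans (scnt_iso s t (fun l hl => (hs.1.1 l hl).1) hst Q)
    rw [this]
    exact Good.mem ht
  | succ k ih =>
    intro α _ hα T
    induction T using WellFoundedGT.induction with
    | ind T ihT =>
    by_cases hreal : ∃ (Q : Pl) (σ : α → Q.Pt), Reals T Q σ
    swap
    · have : cnt T = fun _ => 0 := by
        funext Q
        unfold cnt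
        have : IsEmpty {σ : α → Q.Pt // Reals T Q σ} := ⟨fun σ => hreal ⟨Q, σ.1, σ.2⟩⟩
        simp
      rw [this]
      exact Good.zero R
    obtain ⟨Q₀, σ₀, h₀⟩ := hreal
    have hlin := h₀.lin
    by_cases hx : ∀ x, 3 ≤ (fullLines T x).card
    · obtain ⟨s, hs, hsc, hcnt⟩ := hlin.super hx
      obtain ⟨t, ⟨ht, hst⟩, -⟩ := hR s ⟨hs, by omega⟩
      have : cnt T = scnt t := funext fun Q =>
        (hcnt Q).trans (scnt_iso s t (fun l hl => (hs.1.1 l hl).1) hst Q)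
      rw [this]
      exact Good.mem ht
    · push Not at hx
      obtain ⟨x, hx⟩ := hx
      obtain ⟨p, hp⟩ := weak_count hlin x hx
      have hrec := recursion hlin x p hp
      set S := Finset.univ.filter
        (fun U : α → α → α → Prop => T ≤ U ∧ restr U x = restr T x) with hS
      have hTS : T ∈ S := by simp [hS]
      have hg1 : Good R (cnt (restr T x)) := by
        refine ih (by omega) {y // y ≠ x} ?_ _
        rw [Fintype.card_subtype_compl, hα]
        simp
      have hg2 : Good R (fun Q => ∑ U ∈ S.erase T, cnt U Q) := by
        refine Good.sum _ ?_
        intro U hU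
        rw [Finset.mem_erase, hS, Finset.mem_filter] at hU
        exact ihT U (lt_of_le_of_ne hU.2.2.1 hU.1.symm)
      have := (hg1.mul (p - (oldCount T x : Polynomial ℤ))).sub hg2
      refine Eq.subst (motive := Good R) ?_ this
      funext Q
      rw [← hrec Q, ← Finset.add_sum_erase _ _ hTS]
      ring

/-- Glynn's theorem: for every `n ≥ 1` there are integer polynomials `p` and `p_s`, one for
each isomorphism class of superfigurations on at most `n` points (encoded by a finite set
`R` of representatives, one per isomorphism class, with coefficient polynomials `coef`),
such that for every finite projective plane `Π` of order `q` (every line has `q + 1`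
points), `C_n(Π) = p(q) + ∑_s p_s(q) · A_s(Π)`. -/
theorem glynn (n : ℕ) (hn : 1 ≤ n) :
    ∃ (p : Polynomial ℤ) (R : Finset (Finset ℕ × Finset (Finset ℕ)))
      (coef : Finset ℕ × Finset (Finset ℕ) → Polynomial ℤ),
      (∀ s ∈ R, IsSuperfiguration s.1 s.2 ∧ s.1.card ≤ n) ∧
      (∀ P L, IsSuperfiguration P L → P.card ≤ n → ∃! t, t ∈ R ∧ LSIso (P, L) t) ∧
      ∀ (q : ℕ) (Pt Ln : Type) [Membership Pt Ln] [Finite Pt] [Finite Ln]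
        [Configuration.ProjectivePlane Pt Ln],
        (∀ l : Ln, Nat.card {x : Pt // x ∈ l} = q + 1) →
        (Nat.card {τ : Fin n → Pt // IsPlaneArc Ln τ} : ℤ) =
          p.eval (q : ℤ) +
            ∑ s ∈ R, (coef s).eval (q : ℤ) *
              (Nat.card {σ : {x // x ∈ s.1} → Pt // IsStrongReal Ln s.1 s.2 σ} : ℤ) := by
  obtain ⟨R, hR1, hR2⟩ := exists_super_reps n
  obtain ⟨coef, hcoef⟩ := good_cnt n R hR2 n le_rfl (Fin n) (Fintype.card_fin n)
    (fun a b c => a = b ∨ a = c ∨ b = c)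
  refine ⟨0, R, coef, hR1, fun P L h hc => hR2 (P, L) ⟨h, hc⟩, ?_⟩
  intro q Pt Ln _ _ _ _ hq
  let Q : Pl := { q := q, Pt := Pt, Ln := Ln, hq := hq }
  have h1 := hcoef Q
  rw [Polynomial.eval_zero, zero_add]
  refine Eq.trans ?_ h1
  unfold cnt
  congr 1
  refine Nat.card_congr (Equiv.subtypeEquivRight ?_)
  intro σ
  constructor
  · rintro ⟨h2, h3⟩
    refine ⟨h2, fun a b c => ⟨fun ht => Q.coll_triv ?_, fun hc => ?_⟩⟩
    · rcases ht with rfl | rfl | rfl <;> simp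
    · by_contra ht
      push Not at ht
      exact h3 a b c ht.1 ht.2.1 ht.2.2 hc
  · rintro ⟨h2, h3⟩
    refine ⟨h2, fun a b c hab hac hbc hc => ?_⟩
    have := (h3 a b c).2 hc
    tauto
end

section
/- For every prime power q, the number of ordered 6-arcs in P^3(F_q) is C_{6,4}(q) = (q^2 + q + 1)(q^2 + 1)(q + 1)^2 (q − 1)^3 (q − 2)(q − 3)(q − 4) · q^6. -/
open scoped LinearAlgebra.Projectivization

/-- Four points of `ℙ³(F_q)` are coplanar if vector representatives of them span a subspace
of `F_q^4` of dimension at most 3. -/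
def Coplanar4 (F : Type) [Field F] (x y z w : ℙ F (Fin 4 → F)) : Prop :=
  Module.finrank F
    ↥(x.submodule ⊔ y.submodule ⊔ z.submodule ⊔ w.submodule) ≤ 3

/-- An ordered `n`-arc in `ℙ³(F_q)`: an injective function from `{1,…,n}` to `ℙ³(F_q)`
such that no 4 of its points are coplanar. -/
def IsArc4 (F : Type) [Field F] {n : ℕ} (σ : Fin n → ℙ F (Fin 4 → F)) : Prop :=
  Function.Injective σ ∧
    ∀ a b c d : Fin n, a ≠ b → a ≠ c → a ≠ d → b ≠ c → b ≠ d → c ≠ d →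
      ¬ Coplanar4 F (σ a) (σ b) (σ c) (σ d)


open scoped Matrix

/-- Vector version of the arc condition: a linear relation among the six rows that
vanishes at two distinct places is trivial. -/
def GV {F : Type} [Field F] (v : Matrix (Fin 6) (Fin 4) F) : Prop :=
  ∀ (x : Fin 6 → F) (i j : Fin 6), i ≠ j → x i = 0 → x j = 0 → x ᵥ* v = 0 → x = 0

theorem not_coplanar_iff {F : Type} [Field F] (x y z w : ℙ F (Fin 4 → F))
    (f : Fin 4 → Fin 4 → F) (hx : x.submodule = Submodule.span F {f 0})
    (hy : y.submodule = Submodule.span F {f 1}) (hz : z.submodule = Submodule.span F {f 2})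
    (hw : w.submodule = Submodule.span F {f 3}) :
    ¬ Coplanar4 F x y z w ↔ LinearIndependent F f := by
  rw [linearIndependent_iff_card_le_finrank_span, Coplanar4, hx, hy, hz, hw, Set.finrank]
  have : Set.range f = {f 0} ∪ {f 1} ∪ {f 2} ∪ {f 3} := by
    ext t
    simp [Fin.exists_fin_succ, eq_comm]
    tauto
  rw [this, Submodule.span_union, Submodule.span_union, Submodule.span_union]
  simp
  omega

theorem arc_iff {F : Type} [Field F] (σ : Fin 6 → ℙ F (Fin 4 → F))
    (v : Matrix (Fin 6) (Fin 4) F)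
    (h : ∀ i, (σ i).submodule = Submodule.span F {v i}) :
    IsArc4 F σ ↔ GV v := by
  classical
  constructor
  · rintro ⟨-, H⟩ x i j hij hi hj hx
    obtain ⟨a, b, c, d, hab, hac, had, hbc, hbd, hcd, hs⟩ : ∃ a b c d : Fin 6, a ≠ b ∧ a ≠ c ∧
        a ≠ d ∧ b ≠ c ∧ b ≠ d ∧ c ≠ d ∧ ({i, j} : Finset (Fin 6))ᶜ = {a, b, c, d} := by
      have h4 : (({i, j} : Finset (Fin 6))ᶜ).card = 4 := by
        rw [Finset.card_compl, Finset.card_pair hij]; simp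
      obtain ⟨a, t, hat, hs, h3⟩ := Finset.card_eq_succ.1 h4
      obtain ⟨b, c, d, hbc, hbd, hcd, rfl⟩ := Finset.card_eq_three.1 h3
      simp only [Finset.mem_insert, Finset.mem_singleton, not_or] at hat
      exact ⟨a, b, c, d, hat.1, hat.2.1, hat.2.2, hbc, hbd, hcd, hs.symm⟩
    have hli := (not_coplanar_iff (σ a) (σ b) (σ c) (σ d) ![v a, v b, v c, v d] (h a) (h b) (h c)
      (h d)).1 (H a b c d hab hac had hbc hbd hcd)
    have hsum : ∑ k, x k • v k = 0 := by
      rw [← Matrix.vecMul_eq_sum]; exact hx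
    have hsum2 : ∑ k ∈ ({a, b, c, d} : Finset (Fin 6)), x k • v k = 0 := by
      rw [← hs, ← hsum]
      apply Finset.sum_subset (Finset.subset_univ _)
      intro k _ hk
      simp at hk
      rcases Classical.em (k = i) with rfl | hki
      · simp [hi]
      · rw [hk hki]; simp [hj]
    have h0 := Fintype.linearIndependent_iff.1 hli ![x a, x b, x c, x d] (by
      rw [← hsum2, Finset.sum_insert (by simp [hab, hac, had]),
        Finset.sum_insert (by simp [hbc, hbd]), Finset.sum_insert (by simp [hcd]),
        Finset.sum_singleton]
      simp [Fin.sum_univ_four, add_assoc])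
    funext k
    by_cases hk : k ∈ ({i, j} : Finset (Fin 6))ᶜ
    · rw [hs] at hk
      simp at hk
      rcases hk with rfl | rfl | rfl | rfl
      · exact h0 0
      · exact h0 1
      · exact h0 2
      · exact h0 3
    · simp at hk
      rcases Classical.em (k = i) with rfl | hki
      · exact hi
      · rw [hk hki]; exact hj
  · intro H
    have key : ∀ e : Fin 4 → Fin 6, Function.Injective e →
        LinearIndependent F (fun i => v (e i)) := by
      intro e he
      obtain ⟨i, j, hij, hi, hj⟩ : ∃ i j, i ≠ j ∧ i ∉ Finset.univ.image e ∧
          j ∉ Finset.univ.image e := by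
        have h2 : ((Finset.univ.image e)ᶜ).card = 2 := by
          rw [Finset.card_compl, Finset.card_image_of_injective _ he]; simp
        obtain ⟨i, j, hij, hs⟩ := Finset.card_eq_two.1 h2
        refine ⟨i, j, hij, ?_, ?_⟩ <;> rw [← Finset.mem_compl, hs] <;> simp
      rw [Fintype.linearIndependent_iff]
      intro g hg
      have hx := H (fun k => ∑ m, if e m = k then g m else 0) i j hij
        (by apply Finset.sum_eq_zero; intro m _; rw [if_neg]; rintro rfl; simp at hi)
        (by apply Finset.sum_eq_zero; intro m _; rw [if_neg]; rintro rfl; simp at hj)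
        (by
          rw [Matrix.vecMul_eq_sum, ← hg]
          simp_rw [Finset.sum_smul]
          rw [Finset.sum_comm]
          simp [ite_smul])
      intro m
      have := congrFun hx (e m)
      simpa [he.eq_iff] using this
    refine ⟨?_, ?_⟩
    · intro i j hij
      by_contra hne
      have hs : v i ∈ Submodule.span F {v j} := by
        rw [← h j, ← hij, h i]; exact Submodule.mem_span_singleton_self _
      obtain ⟨r, hr⟩ := Submodule.mem_span_singleton.1 hs
      have h4 : 2 ≤ (({i, j} : Finset (Fin 6))ᶜ).card := by
        rw [Finset.card_compl, Finset.card_pair hne]; simp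
      obtain ⟨k, hk, l, hl, hkl⟩ := Finset.one_lt_card.1 h4
      simp at hk hl
      have := H (Pi.single i 1 - r • Pi.single j 1) k l hkl (by simp [hk]) (by simp [hl])
        (by
          rw [Matrix.sub_vecMul, Matrix.smul_vecMul, Matrix.single_one_vecMul,
            Matrix.single_one_vecMul, sub_eq_zero]
          exact hr.symm)
      have := congrFun this i
      simp [hne] at this
    · intro a b c d hab hac had hbc hbd hcd
      rw [not_coplanar_iff _ _ _ _ (fun i => v (![a, b, c, d] i)) (h a) (h b) (h c) (h d)]
      apply key
      intro m n hmn
      fin_cases m <;> fin_cases n <;> simp_all [eq_comm]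

theorem GV.ne_zero {F : Type} [Field F] {v : Matrix (Fin 6) (Fin 4) F} (h : GV v) (i : Fin 6) :
    v i ≠ 0 := by
  intro hi
  have h2 : 2 ≤ (({i} : Finset (Fin 6))ᶜ).card := by
    rw [Finset.card_compl]; simp
  obtain ⟨k, hk, l, hl, hkl⟩ := Finset.one_lt_card.1 h2
  simp at hk hl
  have := congrFun (h (Pi.single i 1) k l hkl (by simp [hk]) (by simp [hl])
    (by rw [Matrix.single_one_vecMul]; exact hi)) i
  simp at this

theorem card_arcs {F : Type} [Field F] :
    Nat.card ({σ : Fin 6 → ℙ F (Fin 4 → F) // IsArc4 F σ} × (Fin 6 → Fˣ)) =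
      Nat.card {v : Matrix (Fin 6) (Fin 4) F // GV v} := by
  refine Nat.card_eq_of_bijective
    (fun p => ⟨fun i => p.2 i • (p.1.1 i).rep, (arc_iff p.1.1 _ ?_).1 p.1.2⟩) ⟨?_, ?_⟩
  · intro i
    rw [Projectivization.submodule_eq, Submodule.span_singleton_group_smul_eq]
  · rintro ⟨⟨σ, hσ⟩, u⟩ ⟨⟨τ, hτ⟩, w⟩ hp
    have hp' : ∀ i, u i • (σ i).rep = w i • (τ i).rep := fun i =>
      congrFun (congrArg Subtype.val hp) i
    have hst : σ = τ := by
      funext i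
      rw [← (σ i).mk_rep, ← (τ i).mk_rep, Projectivization.mk_eq_mk_iff]
      exact ⟨(u i)⁻¹ * w i, by rw [mul_smul, ← hp' i, inv_smul_smul]⟩
    subst hst
    have huw : u = w := by
      funext i
      have h := hp' i
      simp only [Units.smul_def] at h
      exact Units.ext (smul_left_injective F (σ i).rep_nonzero h)
    rw [huw]
  · rintro ⟨v, hv⟩
    choose a ha using fun i => Projectivization.exists_smul_eq_mk_rep F (v i) (hv.ne_zero i)
    refine ⟨⟨⟨fun i => Projectivization.mk F (v i) (hv.ne_zero i),
      (arc_iff _ v fun i => rfl).2 hv⟩, fun i => (a i)⁻¹⟩, ?_⟩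
    apply Subtype.ext
    funext i
    change (a i)⁻¹ • (Projectivization.mk F (v i) (hv.ne_zero i)).rep = v i
    rw [← ha i, inv_smul_smul]

theorem GV.mul {F : Type} [Field F] {v : Matrix (Fin 6) (Fin 4) F} (h : GV v)
    (g : GL (Fin 4) F) : GV (v * (g : Matrix (Fin 4) (Fin 4) F)) := by
  intro x i j hij hi hj hx
  refine h x i j hij hi hj ?_
  rw [← Matrix.vecMul_vecMul] at hx
  exact Matrix.vecMul_injective_iff_isUnit.2 g.isUnit (by
    change x ᵥ* v ᵥ* _ = 0 ᵥ* _
    rw [hx, Matrix.zero_vecMul])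

/-- The normal form of a vector arc. -/
def WM {F : Type} [Field F] (a b : Fin 4 → F) : Matrix (Fin 6) (Fin 4) F :=
  Matrix.of ![Pi.single 0 1, Pi.single 1 1, Pi.single 2 1, Pi.single 3 1, a, b]

theorem WM_vecMul {F : Type} [Field F] (a b : Fin 4 → F) (x : Fin 6 → F) :
    x ᵥ* WM a b = ![x 0, x 1, x 2, x 3] + x 4 • a + x 5 • b := by
  rw [Matrix.vecMul_eq_sum]
  funext k
  fin_cases k <;> simp [Fin.sum_univ_six, WM, Matrix.vecHead, Matrix.vecTail]

theorem GV_WM {F : Type} [Field F] (a : Fin 4 → Fˣ) (c : Fin 4 ↪ Fˣ) :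
    GV (WM (fun i => (a i : F)) (fun i => (a i : F) * (c i : F))) := by
  intro x i j hij hi hj hx
  rw [WM_vecMul] at hx
  have hk : ∀ k : Fin 4, ![x 0, x 1, x 2, x 3] k = -((a k : F) * (x 4 + c k * x 5)) := by
    intro k
    have := congrFun hx k
    simp only [Pi.add_apply, Pi.smul_apply, Pi.zero_apply, smul_eq_mul] at this
    linear_combination this
  have hc : ∀ k l : Fin 4, k ≠ l → (c k : F) - c l ≠ 0 := by
    intro k l hkl h
    exact hkl (c.injective (Units.ext (sub_eq_zero.1 h)))
  have hz : ∀ k : Fin 4, ![x 0, x 1, x 2, x 3] k = 0 → x 4 + c k * x 5 = 0 := by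
    intro k h0
    have := hk k
    rw [h0] at this
    simpa using this.symm
  have h45 : x 4 = 0 ∧ x 5 = 0 := by
    have A : ∀ k l : Fin 4, k ≠ l → ![x 0, x 1, x 2, x 3] k = 0 →
        ![x 0, x 1, x 2, x 3] l = 0 → x 4 = 0 ∧ x 5 = 0 := by
      intro k l hkl h1 h2
      have e1 := hz k h1
      have e2 := hz l h2
      have : ((c k : F) - c l) * x 5 = 0 := by linear_combination e1 - e2
      have h5 := (mul_eq_zero.1 this).resolve_left (hc k l hkl)
      rw [h5] at e1
      exact ⟨by simpa using e1, h5⟩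
    have B : ∀ k : Fin 4, ![x 0, x 1, x 2, x 3] k = 0 → x 4 = 0 → x 4 = 0 ∧ x 5 = 0 := by
      intro k h1 h4
      have e1 := hz k h1
      rw [h4] at e1
      exact ⟨h4, by simpa using e1⟩
    have C : ∀ k : Fin 4, ![x 0, x 1, x 2, x 3] k = 0 → x 5 = 0 → x 4 = 0 ∧ x 5 = 0 := by
      intro k h1 h4
      have e1 := hz k h1
      rw [h4] at e1
      exact ⟨by simpa using e1, h4⟩
    have hsplit : ∀ m : Fin 6, (∃ k : Fin 4, m = k.castLE (by norm_num)) ∨ m = 4 ∨ m = 5 := by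
      decide
    have hval : ∀ k : Fin 4, x (k.castLE (by norm_num)) = ![x 0, x 1, x 2, x 3] k := by
      intro k; fin_cases k <;> rfl
    rcases hsplit i with ⟨k, rfl⟩ | rfl | rfl <;> rcases hsplit j with ⟨l, rfl⟩ | rfl | rfl
    · rw [hval] at hi hj
      exact A k l (fun h => hij (by rw [h])) hi hj
    · rw [hval] at hi
      exact B k hi hj
    · rw [hval] at hi
      exact C k hi hj
    · rw [hval] at hj
      exact B l hj hi
    · exact absurd rfl hij
    · exact ⟨hi, hj⟩
    · rw [hval] at hj
      exact C l hj hi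
    · exact ⟨hj, hi⟩
    · exact absurd rfl hij
  obtain ⟨h4, h5⟩ := h45
  simp only [h4, h5] at hk
  funext m
  fin_cases m
  · simpa using hk 0
  · simpa using hk 1
  · simpa using hk 2
  · simpa using hk 3
  · exact h4
  · exact h5

theorem of_GV_WM {F : Type} [Field F] (a b : Fin 4 → F) (h : GV (WM a b)) :
    (∀ i, a i ≠ 0) ∧ (∀ i, b i ≠ 0) ∧ ∀ i j, i ≠ j → a i * b j ≠ a j * b i := by
  have vec : ∀ y : Fin 4 → F, ![y 0, y 1, y 2, y 3] = y := by
    intro y; funext k; fin_cases k <;> rfl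
  have get : ∀ (y : Fin 4 → F) (s t : F) (k : Fin 4),
      (![y 0, y 1, y 2, y 3, s, t] : Fin 6 → F) (k.castLE (by norm_num)) = y k := by
    intro y s t k; fin_cases k <;> rfl
  have rel : ∀ s t : F, ![(-(s • a + t • b)) 0, (-(s • a + t • b)) 1, (-(s • a + t • b)) 2,
      (-(s • a + t • b)) 3, s, t] ᵥ* WM a b = 0 := by
    intro s t
    rw [WM_vecMul]
    change ![(-(s • a + t • b)) 0, (-(s • a + t • b)) 1, (-(s • a + t • b)) 2,
      (-(s • a + t • b)) 3] + s • a + t • b = 0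
    rw [vec]
    abel
  have ha : ∀ i, a i ≠ 0 := by
    intro i hi
    have := h _ (i.castLE (by norm_num)) 5 (by fin_cases i <;> decide)
      (by rw [get]; simp [hi]) rfl (rel 1 0)
    have := congrFun this 4
    exact one_ne_zero this
  have hb : ∀ i, b i ≠ 0 := by
    intro i hi
    have := h _ (i.castLE (by norm_num)) 4 (by fin_cases i <;> decide)
      (by rw [get]; simp [hi]) rfl (rel 0 1)
    have := congrFun this 5
    exact one_ne_zero this
  refine ⟨ha, hb, ?_⟩
  intro i j hij hE
  have := h _ (i.castLE (by norm_num)) (j.castLE (by norm_num))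
    (fun e => hij (Fin.castLE_injective _ e))
    (by rw [get]; simp; ring) (by rw [get]; simp; linear_combination hE) (rel (b i) (-a i))
  exact hb i (congrFun this 4)

theorem WM_mul_row {F : Type} [Field F] (a b : Fin 4 → F) (g : Matrix (Fin 4) (Fin 4) F)
    (k : Fin 4) : (WM a b * g) (k.castLE (by norm_num)) = g k := by
  rw [Matrix.mul_apply_eq_vecMul]
  have : WM a b (k.castLE (by norm_num)) = Pi.single k 1 := by fin_cases k <;> rfl
  rw [this, Matrix.single_one_vecMul]
  rfl

theorem card_GV {F : Type} [Field F] :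
    Nat.card (GL (Fin 4) F × (Fin 4 → Fˣ) × (Fin 4 ↪ Fˣ)) =
      Nat.card {v : Matrix (Fin 6) (Fin 4) F // GV v} := by
  refine Nat.card_eq_of_bijective
    (fun p => ⟨_, (GV_WM p.2.1 p.2.2).mul p.1⟩) ⟨?_, ?_⟩
  · rintro ⟨g, a, c⟩ ⟨g', a', c'⟩ hp
    have hp' := congrArg Subtype.val hp
    simp only at hp'
    have hg : g = g' := by
      apply Units.ext
      funext k
      have := congrFun hp' (k.castLE (by norm_num))
      rwa [WM_mul_row, WM_mul_row] at this
    subst hg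
    have hW := (Matrix.mul_left_inj_of_invertible (g : Matrix (Fin 4) (Fin 4) F)).1 hp'
    have ha : a = a' := by
      funext k
      exact Units.ext (congrFun (congrFun hW 4) k)
    subst ha
    have hc : c = c' := by
      ext k
      have := congrFun (congrFun hW 5) k
      exact mul_left_cancel₀ (a k).ne_zero this
    rw [hc]
  · rintro ⟨v, hv⟩
    let M : Matrix (Fin 4) (Fin 4) F := fun k => v (k.castLE (by norm_num))
    have hM : IsUnit M := by
      rw [← Matrix.vecMul_injective_iff_isUnit]
      rw [← Matrix.coe_vecMulLinear, injective_iff_map_eq_zero]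
      intro y hy
      have := hv ![y 0, y 1, y 2, y 3, 0, 0] 4 5 (by decide) rfl rfl (by
        rw [← hy, Matrix.vecMulLinear_apply, Matrix.vecMul_eq_sum, Matrix.vecMul_eq_sum,
          Fin.sum_univ_six, Fin.sum_univ_four]
        simp [M])
      funext k
      fin_cases k
      · exact congrFun this 0
      · exact congrFun this 1
      · exact congrFun this 2
      · exact congrFun this 3
    obtain ⟨g, hg⟩ := hM
    have hv' := hv.mul g⁻¹
    set W := v * ((g⁻¹ : GL (Fin 4) F) : Matrix (Fin 4) (Fin 4) F) with hWdef
    have hWv : W * (g : Matrix (Fin 4) (Fin 4) F) = v := by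
      rw [hWdef, Matrix.mul_assoc, ← Units.val_mul]; simp
    have hrow : ∀ k : Fin 4, W (k.castLE (by norm_num)) = Pi.single k 1 := by
      intro k
      apply Matrix.vecMul_injective_iff_isUnit.2 g.isUnit
      change W (k.castLE (by norm_num)) ᵥ* (g : Matrix (Fin 4) (Fin 4) F) =
        Pi.single k 1 ᵥ* (g : Matrix (Fin 4) (Fin 4) F)
      rw [← Matrix.mul_apply_eq_vecMul, hWv, Matrix.single_one_vecMul, hg]
      rfl
    have hW : W = WM (W 4) (W 5) := by
      funext m
      fin_cases m
      · exact hrow 0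
      · exact hrow 1
      · exact hrow 2
      · exact hrow 3
      · rfl
      · rfl
    rw [hW] at hv'
    obtain ⟨ha, hb, hab⟩ := of_GV_WM _ _ hv'
    refine ⟨⟨g, fun k => Units.mk0 _ (ha k),
      ⟨fun k => Units.mk0 _ (div_ne_zero (hb k) (ha k)), ?_⟩⟩, ?_⟩
    · intro k l hkl
      by_contra hne
      have := congrArg Units.val hkl
      simp only [Units.val_mk0] at this
      rw [div_eq_div_iff (ha k) (ha l)] at this
      exact hab k l hne (by linear_combination -this)
    · apply Subtype.ext
      change WM (W 4) (fun i => W 4 i * (W 5 i / W 4 i)) * (g : Matrix (Fin 4) (Fin 4) F) = v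
      have : (fun i => W 4 i * (W 5 i / W 4 i)) = W 5 := by
        funext i
        exact mul_div_cancel₀ _ (ha i)
      rw [this, ← hW, hWv]

/-- For every prime power `q`,
`C_{6,4}(q) = (q^2+q+1)(q^2+1)(q+1)^2 (q-1)^3 (q-2)(q-3)(q-4) q^6`. -/
theorem C64_formula (F : Type) [Field F] [Fintype F] (q : ℕ) (hq : q = Fintype.card F) :
    (Nat.card {σ : Fin 6 → ℙ F (Fin 4 → F) // IsArc4 F σ} : ℤ) =
      ((q : ℤ)^2 + q + 1) * ((q : ℤ)^2 + 1) * ((q : ℤ) + 1)^2 * ((q : ℤ) - 1)^3 *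
        ((q : ℤ) - 2) * ((q : ℤ) - 3) * ((q : ℤ) - 4) * (q : ℤ)^6 := by
  classical
  have h := (card_arcs (F := F)).trans (card_GV (F := F)).symm
  have hq1 : 1 < q := by rw [hq]; exact Fintype.one_lt_card
  have hu : Nat.card Fˣ = q - 1 := by
    rw [Nat.card_eq_fintype_card, Fintype.card_units, hq]
  have he : Nat.card (Fin 4 ↪ Fˣ) = (q - 1).descFactorial 4 := by
    rw [Nat.card_eq_fintype_card, Fintype.card_embedding_eq, ← Nat.card_eq_fintype_card, hu,
      Fintype.card_fin]
  rw [Nat.card_prod, Nat.card_prod, Nat.card_prod, Nat.card_fun, Nat.card_fun, hu, he,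
    Matrix.card_GL_field, ← hq] at h
  simp only [Nat.card_eq_fintype_card (α := Fin 6), Nat.card_eq_fintype_card (α := Fin 4),
    Fintype.card_fin] at h
  generalize Nat.card {σ : Fin 6 → ℙ F (Fin 4 → F) // IsArc4 F σ} = N at h ⊢
  have hd : (((q - 1).descFactorial 4 : ℕ) : ℤ) =
      ((q : ℤ) - 1) * ((q : ℤ) - 2) * ((q : ℤ) - 3) * ((q : ℤ) - 4) := by
    rcases Nat.lt_or_ge q 5 with h5 | h5
    · interval_cases q <;> simp [Nat.descFactorial]
    · obtain ⟨r, rfl⟩ := Nat.exists_eq_add_of_le h5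
      have : 5 + r - 1 = r + 4 := by omega
      rw [this]
      simp only [Nat.descFactorial]
      have e1 : r + 4 - 3 = r + 1 := by omega
      have e2 : r + 4 - 2 = r + 2 := by omega
      have e3 : r + 4 - 1 = r + 3 := by omega
      rw [e1, e2, e3]
      push_cast
      simp
      ring
  have h' := congrArg (Nat.cast : ℕ → ℤ) h
  have hle : ∀ i : Fin 4, q ^ (i : ℕ) ≤ q ^ 4 := fun i => Nat.pow_le_pow_right (by omega) (by omega)
  push_cast [hd, Nat.cast_sub hq1.le, Nat.cast_sub (hle _)] at h'
  rw [Fin.prod_univ_four] at h'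
  have hq1' : (1 : ℤ) < q := by exact_mod_cast hq1
  have hne : ((q : ℤ) - 1) ^ 6 ≠ 0 := pow_ne_zero _ (by omega)
  apply mul_right_cancel₀ hne
  rw [h']
  simp
  ring
end
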